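/- Fix 0 ≤ ε < 1, η ∈ (0,1), a finite input alphabet X, and natural numbers k ≥ s ≥ 0 with η^{2s} ≥ 1 − ε. Then there exists a partition of X^k with exactly |X|^{k−s} blocks that is an ε-reverse compression of the k-fold erasure channel P_η^k, i.e., every pair of sequences x^k, x̂^k in the same block satisfies F(P_η^k(·|x^k), P_η^k(·|x̂^k)) ≥ 1 − ε. Consequently the compressibility of k uses satisfies Γ_ε^{(k)} ≥ (|X|^k − |X|^{k−s})/(|X|^k − 1) for |X|^k ≥ 2, and the asymptotic compressibility satisfies Δ_ε ≥ 1 − |X|^{−s}. -/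

import Mathlib

open scoped BigOperators

/-- The classical fidelity of two probability distributions on a finite set. -/
noncomputable def fidelity {Y : Type*} [Fintype Y] (p q : Y → ℝ) : ℝ :=
  (∑ y, Real.sqrt (p y * q y)) ^ 2

/-- The classical erasure channel with parameter `η` on input alphabet `X`;
`none` plays the role of the erasure symbol. -/
noncomputable def erasureChannel {X : Type*} [DecidableEq X] (η : ℝ) (x : X) :
    Option X → ℝ
  | some x' => if x' = x then 1 - η else 0
  | none => η

/-- The output distribution of `k` independent (memoryless, feedback-free)
uses of the erasure channel on the input sequence `x`. -/
noncomputable def erasureChannelK {X : Type*} [DecidableEq X] (η : ℝ) (k : ℕ)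
    (x : Fin k → X) : (Fin k → Option X) → ℝ :=
  fun y => ∏ i, erasureChannel η (x i) (y i)

/-- A partition of `X^k` is an ε-reverse compression of the `k`-fold erasure
channel `P_η^k` if every pair of sequences in the same block has output
fidelity at least `1 − ε`. -/
def IsReverseCompression (X : Type) [Fintype X] [DecidableEq X] (ε η : ℝ) (k : ℕ)
    (P : Set (Set (Fin k → X))) : Prop :=
  Setoid.IsPartition P ∧
    ∀ A ∈ P, ∀ x ∈ A, ∀ x' ∈ A,
      fidelity (erasureChannelK η k x) (erasureChannelK η k x') ≥ 1 - ε

/-- The compressibility `Γ_ε^{(k)}` of `k` uses of the erasure channel: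
the supremum of `(|X^k| − |P|)/(|X^k| − 1)` over all ε-reverse compressions
`P` of `P_η^k`. -/
noncomputable def compressibility (X : Type) [Fintype X] [DecidableEq X]
    (ε η : ℝ) (k : ℕ) : ℝ :=
  sSup { g : ℝ | ∃ P : Set (Set (Fin k → X)), IsReverseCompression X ε η k P ∧
    g = ((Fintype.card X : ℝ) ^ k - P.ncard) / ((Fintype.card X : ℝ) ^ k - 1) }

lemma erasure_nonneg {X : Type} [DecidableEq X] {η : ℝ} (hη : η ∈ Set.Ioo (0 : ℝ) 1)
    (x : X) (y : Option X) : 0 ≤ erasureChannel η x y := by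
  obtain ⟨h0, h1⟩ := hη
  cases y with
  | none => exact h0.le
  | some z =>
    simp only [erasureChannel]
    split_ifs
    · linarith
    · exact le_rfl

lemma single_ge {X : Type} [Fintype X] [DecidableEq X] {η : ℝ} (hη : η ∈ Set.Ioo (0 : ℝ) 1)
    (x x' : X) :
    η ≤ ∑ y : Option X, Real.sqrt (erasureChannel η x y * erasureChannel η x' y) := by
  rw [Fintype.sum_option]
  have h : Real.sqrt (erasureChannel η x none * erasureChannel η x' none) = η := by
    simp only [erasureChannel]
    exact Real.sqrt_mul_self hη.1.le
  rw [h]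
  have := Finset.sum_nonneg (s := (Finset.univ : Finset X))
    (f := fun z => Real.sqrt (erasureChannel η x (some z) * erasureChannel η x' (some z)))
    (fun _ _ => Real.sqrt_nonneg _)
  linarith

lemma single_eq {X : Type} [Fintype X] [DecidableEq X] {η : ℝ} (hη : η ∈ Set.Ioo (0 : ℝ) 1)
    (x : X) :
    ∑ y : Option X, Real.sqrt (erasureChannel η x y * erasureChannel η x y) = 1 := by
  simp_rw [Real.sqrt_mul_self (erasure_nonneg hη x _)]
  rw [Fintype.sum_option]
  simp [erasureChannel]

lemma sum_sqrt_eq {X : Type} [Fintype X] [DecidableEq X] {η : ℝ} (hη : η ∈ Set.Ioo (0 : ℝ) 1)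
    (k : ℕ) (x x' : Fin k → X) :
    ∑ y, Real.sqrt (erasureChannelK η k x y * erasureChannelK η k x' y) =
      ∏ i, ∑ y : Option X, Real.sqrt (erasureChannel η (x i) y * erasureChannel η (x' i) y) := by
  rw [Finset.prod_univ_sum, Fintype.piFinset_univ]
  refine Finset.sum_congr rfl fun y _ => ?_
  rw [erasureChannelK, erasureChannelK, ← Finset.prod_mul_distrib, Real.sqrt_prod]
  intro i _
  exact mul_nonneg (erasure_nonneg hη _ _) (erasure_nonneg hη _ _)

lemma exists_part {X : Type} [Fintype X] [DecidableEq X]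
    (hX : 1 ≤ Fintype.card X) (ε η : ℝ)
    (hη : η ∈ Set.Ioo (0 : ℝ) 1) (k s : ℕ) (hsk : s ≤ k)
    (hfid : η ^ (2 * s) ≥ 1 - ε) :
    ∃ P : Set (Set (Fin k → X)), IsReverseCompression X ε η k P ∧
      P.ncard = Fintype.card X ^ (k - s) := by
  obtain ⟨t, rfl⟩ : ∃ t, k = t + s := ⟨k - s, by omega⟩
  haveI : Nonempty X := Fintype.card_pos_iff.mp hX
  let f : (Fin (t + s) → X) → (Fin t → X) := fun x i => x (Fin.castAdd s i)
  have hf : Function.Surjective f := by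
    intro z
    refine ⟨Fin.append z (fun _ => Classical.arbitrary X), ?_⟩
    funext i
    simp [f]
  refine ⟨(Setoid.ker f).classes, ⟨Setoid.isPartition_classes _, ?_⟩, ?_⟩
  · intro A hA x hx x' hx'
    have hxx : f x = f x' := (Setoid.rel_iff_exists_classes (Setoid.ker f)).2 ⟨A, hA, hx, hx'⟩
    have h0 : (0 : ℝ) ≤ η := hη.1.le
    rw [fidelity, sum_sqrt_eq hη, Fin.prod_univ_add]
    have h1 : ∀ i : Fin t, ∑ y : Option X, Real.sqrt
        (erasureChannel η (x (Fin.castAdd s i)) y * erasureChannel η (x' (Fin.castAdd s i)) y)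
        = 1 := by
      intro i
      have : x (Fin.castAdd s i) = x' (Fin.castAdd s i) := congrFun hxx i
      rw [this]
      exact single_eq hη _
    rw [Finset.prod_congr rfl (fun i _ => h1 i), Finset.prod_const_one, one_mul]
    have h2 : η ^ s ≤ ∏ i : Fin s, ∑ y : Option X, Real.sqrt
        (erasureChannel η (x (Fin.natAdd t i)) y * erasureChannel η (x' (Fin.natAdd t i)) y) := by
      calc η ^ s = ∏ _i : Fin s, η := by simp
        _ ≤ _ := Finset.prod_le_prod (fun _ _ => h0) (fun i _ => single_ge hη _ _)
    calc 1 - ε ≤ η ^ (2 * s) := hfid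
      _ = (η ^ s) ^ 2 := by rw [mul_comm, pow_mul]
      _ ≤ _ := pow_le_pow_left₀ (pow_nonneg h0 _) h2 2
  · rw [← Nat.card_coe_set_eq, ← Nat.card_congr (Setoid.quotientEquivClasses (Setoid.ker f)),
      Nat.card_congr (Setoid.quotientKerEquivOfSurjective f hf)]
    simp

lemma compress_ge {X : Type} [Fintype X] [DecidableEq X]
    (hX : 1 ≤ Fintype.card X) (ε η : ℝ)
    (hη : η ∈ Set.Ioo (0 : ℝ) 1) (k s : ℕ) (hsk : s ≤ k)
    (hfid : η ^ (2 * s) ≥ 1 - ε) :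
    compressibility X ε η k ≥
        ((Fintype.card X : ℝ) ^ k - (Fintype.card X : ℝ) ^ (k - s)) /
          ((Fintype.card X : ℝ) ^ k - 1) := by
  obtain ⟨P, hP, hc⟩ := exists_part hX ε η hη k s hsk hfid
  refine le_csSup ?_ ⟨P, hP, by rw [hc]; push_cast; rfl⟩
  apply Set.Finite.bddAbove
  refine (Set.finite_range (fun P : Set (Set (Fin k → X)) =>
    ((Fintype.card X : ℝ) ^ k - P.ncard) / ((Fintype.card X : ℝ) ^ k - 1))).subset ?_
  rintro g ⟨P, -, rfl⟩
  exact ⟨P, rfl⟩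

/-- Fix `0 ≤ ε < 1`, `η ∈ (0,1)`, a finite alphabet `X`, and
`k ≥ s ≥ 0` with `η^(2s) ≥ 1 − ε`. Then there is a partition of `X^k` with
exactly `|X|^(k−s)` blocks which is an ε-reverse compression of the `k`-fold
erasure channel. Consequently `Γ_ε^{(k)} ≥ (|X|^k − |X|^(k−s))/(|X|^k − 1)`
when `|X|^k ≥ 2`, and the asymptotic compressibility `Δ_ε = lim_k Γ_ε^{(k)}`
satisfies `Δ_ε ≥ 1 − |X|^(−s)`. -/
theorem erasure_reverse_compression_bounds {X : Type} [Fintype X] [DecidableEq X]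
    (hX : 1 ≤ Fintype.card X) (ε η : ℝ) (hε : 0 ≤ ε) (hε1 : ε < 1)
    (hη : η ∈ Set.Ioo (0 : ℝ) 1) (k s : ℕ) (hsk : s ≤ k)
    (hfid : η ^ (2 * s) ≥ 1 - ε) :
    (∃ P : Set (Set (Fin k → X)), IsReverseCompression X ε η k P ∧
      P.ncard = Fintype.card X ^ (k - s)) ∧
    (2 ≤ Fintype.card X ^ k →
      compressibility X ε η k ≥
        ((Fintype.card X : ℝ) ^ k - (Fintype.card X : ℝ) ^ (k - s)) /
          ((Fintype.card X : ℝ) ^ k - 1)) ∧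
    (∀ Δ : ℝ,
      Filter.Tendsto (fun m : ℕ => compressibility X ε η m) Filter.atTop (nhds Δ) →
      Δ ≥ 1 - (Fintype.card X : ℝ) ^ (-(s : ℤ))) := by
  refine ⟨exists_part hX ε η hη k s hsk hfid,
    fun _ => compress_ge hX ε η hη k s hsk hfid, ?_⟩
  intro Δ hΔ
  refine ge_of_tendsto hΔ ?_
  filter_upwards [Filter.eventually_ge_atTop (s + 1)] with m hm
  refine le_trans ?_ (compress_ge hX ε η hη m s (by omega) hfid)
  rcases hX.eq_or_lt with h1 | h2
  · rw [← h1]; simp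
  · have hn : (1 : ℝ) < (Fintype.card X : ℝ) := by exact_mod_cast h2
    obtain ⟨t, rfl⟩ : ∃ t, m = t + s := ⟨m - s, by omega⟩
    have hm1 : (1 : ℝ) < (Fintype.card X : ℝ) ^ (t + s) := one_lt_pow₀ hn (by omega)
    rw [Nat.add_sub_cancel, le_div_iff₀ (by linarith), zpow_neg, zpow_natCast]
    have ht : (0 : ℝ) < (Fintype.card X : ℝ) ^ s := by positivity
    have hs1 : ((Fintype.card X : ℝ) ^ s)⁻¹ ≤ 1 := inv_le_one_of_one_le₀ (one_le_pow₀ hn.le)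
    have e : ((Fintype.card X : ℝ) ^ s)⁻¹ * (Fintype.card X : ℝ) ^ (t + s)
        = (Fintype.card X : ℝ) ^ t := by
      rw [pow_add]; field_simp
    nlinarith
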